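/- Let m, c, k, h0, ch, vd, ω be positive reals with ω² > 2k/m − k·h0·(2·(c + k·ch·vd) + k·h0)/m², set s = iω, and let z₁, z₂ : ℝ → ℂ. Assume: z₁ and z₂ are twice differentiable with continuous first and second derivatives on [0,∞); z₁, z₁', z₂, z₂', z₂'' are all of exponential order a for some real a with a < 0; z₁(0) = 0, z₂(0) = 0 and z₂'(0) = 0; the differential equation z₂''(t) + ((c + k·h0 + k·ch·vd)/m)·z₂'(t) + (k/m)·z₂(t) = ((c + k·ch·vd)/m)·z₁'(t) + (k/m)·z₁(t) holds for all t ≥ 0; and L[z₁](s) ≠ 0. Then ‖L[z₂](s) / L[z₁](s)‖ < 1, i.e., the platoon with autonomous unidirectional variable-time-headway controller is stable at frequency ω. -/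

import Mathlib

open MeasureTheory

/-- The Laplace transform of `f : ℝ → ℂ` at `s : ℂ`:  `∫ t in (0,∞), e^{-s t} f t`. -/
noncomputable def laplace (f : ℝ → ℂ) (s : ℂ) : ℂ :=
  ∫ t in Set.Ioi (0 : ℝ), Complex.exp (-(s * t)) * f t

/-- `f` is of exponential order `a`: there is `M > 0` with `‖f t‖ ≤ M e^{a t}` for `t ≥ 0`. -/
def ExpOrder (f : ℝ → ℂ) (a : ℝ) : Prop :=
  ∃ M > 0, ∀ t ≥ (0 : ℝ), ‖f t‖ ≤ M * Real.exp (a * t)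

/-!
Write `α = (c + k h0 + k ch vd) / m`, `β = (c + k ch vd) / m` and `κ = k / m`. Under zero initial
conditions the Laplace transform turns the differential equation into
`(s² + α s + κ) Z₂ = (β s + κ) Z₁`, so the frequency response is the rational function
`(β s + κ) / (s² + α s + κ)`. At `s = iω` the squared moduli of denominator and numerator differ by
`ω² (ω² - (2κ - (α² - β²)))`, whose positivity is the frequency condition.
-/

/-- Absolute convergence of the integral defining `laplace f s`, without which `laplace f s` is the
junk value `0`. -/
def LaplaceConvergent (f : ℝ → ℂ) (s : ℂ) : Prop :=
  IntegrableOn (fun t : ℝ => Complex.exp (-(s * t)) * f t) (Set.Ioi 0)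

section Linearity

variable {f g : ℝ → ℂ} {s : ℂ}

lemma LaplaceConvergent.add (hf : LaplaceConvergent f s) (hg : LaplaceConvergent g s) :
    LaplaceConvergent (fun t => f t + g t) s := by
  simp only [LaplaceConvergent, mul_add]
  exact IntegrableOn.add hf hg

lemma LaplaceConvergent.sub (hf : LaplaceConvergent f s) (hg : LaplaceConvergent g s) :
    LaplaceConvergent (fun t => f t - g t) s := by
  simp only [LaplaceConvergent, mul_sub]
  exact IntegrableOn.sub hf hg

lemma LaplaceConvergent.const_mul (hf : LaplaceConvergent f s) (c : ℂ) :
    LaplaceConvergent (fun t => c * f t) s := by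
  simpa only [LaplaceConvergent, IntegrableOn, mul_left_comm _ c] using Integrable.const_mul hf c

lemma LaplaceConvergent.congr (hf : LaplaceConvergent f s) (hfg : Set.EqOn f g (Set.Ioi 0)) :
    LaplaceConvergent g s :=
  IntegrableOn.congr_fun hf (fun t ht => by simp only [hfg ht]) measurableSet_Ioi

lemma laplace_add (hf : LaplaceConvergent f s) (hg : LaplaceConvergent g s) :
    laplace (fun t => f t + g t) s = laplace f s + laplace g s := by
  simpa only [laplace, mul_add] using integral_add hf hg

lemma laplace_sub (hf : LaplaceConvergent f s) (hg : LaplaceConvergent g s) :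
    laplace (fun t => f t - g t) s = laplace f s - laplace g s := by
  simpa only [laplace, mul_sub] using integral_sub hf hg

lemma laplace_const_mul (c : ℂ) (f : ℝ → ℂ) (s : ℂ) :
    laplace (fun t => c * f t) s = c * laplace f s := by
  simp only [laplace, mul_left_comm _ c, integral_const_mul]

lemma laplace_congr (hfg : Set.EqOn f g (Set.Ioi 0)) : laplace f s = laplace g s :=
  setIntegral_congr_fun measurableSet_Ioi fun t ht => by simp only [hfg ht]

end Linearity

lemma ExpOrder.laplaceConvergent {f : ℝ → ℂ} {a : ℝ} {s : ℂ} (hf : ExpOrder f a)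
    (hmeas : AEStronglyMeasurable f (volume.restrict (Set.Ioi 0))) (has : a < s.re) :
    LaplaceConvergent f s := by
  obtain ⟨M, -, hM⟩ := hf
  have hbound : IntegrableOn (fun t : ℝ => M * Real.exp ((a - s.re) * t)) (Set.Ioi 0) :=
    (integrableOn_exp_mul_Ioi (sub_neg.mpr has) 0).const_mul M
  have hkernel : Continuous fun t : ℝ => Complex.exp (-(s * t)) := by fun_prop
  refine Integrable.mono' hbound (hkernel.aestronglyMeasurable.mul hmeas) ?_
  filter_upwards [ae_restrict_mem measurableSet_Ioi] with t ht
  calc ‖Complex.exp (-(s * t)) * f t‖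
      = Real.exp (-(s.re * t)) * ‖f t‖ := by simp [Complex.norm_exp]
    _ ≤ Real.exp (-(s.re * t)) * (M * Real.exp (a * t)) := by gcongr; exact hM t (le_of_lt ht)
    _ = M * Real.exp ((a - s.re) * t) := by
      rw [mul_left_comm, ← Real.exp_add]
      ring_nf

lemma ExpOrder.laplaceConvergent_of_continuousOn {f : ℝ → ℂ} {a : ℝ} {s : ℂ} (hf : ExpOrder f a)
    (hcont : ContinuousOn f (Set.Ici 0)) (has : a < s.re) : LaplaceConvergent f s :=
  hf.laplaceConvergent
    ((hcont.mono Set.Ioi_subset_Ici_self).aestronglyMeasurable measurableSet_Ioi) has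

lemma hasDerivAt_exp_neg_mul_ofReal (s : ℂ) (t : ℝ) :
    HasDerivAt (fun t : ℝ => Complex.exp (-(s * t))) (-s * Complex.exp (-(s * t))) t := by
  have hlin : HasDerivAt (fun t : ℝ => -(s * (t : ℂ))) (-(s * 1)) t :=
    (Complex.ofRealCLM.hasDerivAt.const_mul s).neg
  exact hlin.cexp.congr_deriv (by ring)

lemma laplace_deriv {f f' : ℝ → ℂ} {s : ℂ} (hcont : ContinuousWithinAt f (Set.Ici 0) 0)
    (hderiv : ∀ t ∈ Set.Ioi (0 : ℝ), HasDerivAt f (f' t) t)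
    (hf : LaplaceConvergent f s) (hf' : LaplaceConvergent f' s) :
    laplace f' s = s * laplace f s - f 0 := by
  let F : ℝ → ℂ := fun t => Complex.exp (-(s * t)) * f t
  have hkernel : Continuous fun t : ℝ => Complex.exp (-(s * t)) := by fun_prop
  have hF : ∀ t ∈ Set.Ioi (0 : ℝ), HasDerivAt F (Complex.exp (-(s * t)) * (f' t - s * f t)) t :=
    fun t ht => ((hasDerivAt_exp_neg_mul_ofReal s t).mul (hderiv t ht)).congr_deriv (by ring)
  have hF'int : LaplaceConvergent (fun t => f' t - s * f t) s := hf'.sub (hf.const_mul s)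
  have hFtop : Filter.Tendsto F Filter.atTop (nhds 0) :=
    tendsto_zero_of_hasDerivAt_of_integrableOn_Ioi hF hF'int hf
  have hFTC : laplace (fun t => f' t - s * f t) s = 0 - F 0 :=
    integral_Ioi_of_hasDerivAt_of_tendsto (hkernel.continuousWithinAt.mul hcont) hF hF'int hFtop
  rw [laplace_sub hf' (hf.const_mul s), laplace_const_mul] at hFTC
  have hF0 : F 0 = f 0 := by simp [F]
  linear_combination hFTC - hF0

lemma laplace_deriv_of_zero_initial {f f' : ℝ → ℂ} {s : ℂ}
    (hderiv : ∀ t ∈ Set.Ici (0 : ℝ), HasDerivWithinAt f (f' t) (Set.Ici 0) t) (h0 : f 0 = 0)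
    (hf : LaplaceConvergent f s) (hf' : LaplaceConvergent f' s) :
    laplace f' s = s * laplace f s := by
  rw [laplace_deriv (hderiv 0 Set.self_mem_Ici).continuousWithinAt
    (fun t ht => (hderiv t (Set.Ioi_subset_Ici_self ht)).hasDerivAt (Ici_mem_nhds ht)) hf hf',
    h0, sub_zero]

lemma laplace_transfer_equation {y y' y'' u u' : ℝ → ℂ} {s a₀ a₁ b₀ b₁ : ℂ}
    (hu : ∀ t ∈ Set.Ici (0 : ℝ), HasDerivWithinAt u (u' t) (Set.Ici 0) t)
    (hy : ∀ t ∈ Set.Ici (0 : ℝ), HasDerivWithinAt y (y' t) (Set.Ici 0) t)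
    (hy' : ∀ t ∈ Set.Ici (0 : ℝ), HasDerivWithinAt y' (y'' t) (Set.Ici 0) t)
    (hLu : LaplaceConvergent u s) (hLu' : LaplaceConvergent u' s)
    (hLy : LaplaceConvergent y s) (hLy' : LaplaceConvergent y' s)
    (hu0 : u 0 = 0) (hy0 : y 0 = 0) (hy'0 : y' 0 = 0)
    (hode : ∀ t > (0 : ℝ), y'' t + a₁ * y' t + a₀ * y t = b₁ * u' t + b₀ * u t) :
    (s ^ 2 + a₁ * s + a₀) * laplace y s = (b₁ * s + b₀) * laplace u s := by
  have hrhs := (hLu'.const_mul b₁).add (hLu.const_mul b₀)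
  have hlow := (hLy'.const_mul a₁).add (hLy.const_mul a₀)
  have hsolve : Set.EqOn (fun t => (b₁ * u' t + b₀ * u t) - (a₁ * y' t + a₀ * y t)) y''
      (Set.Ioi 0) := fun t ht => by linear_combination -hode t ht
  have hLy'' : LaplaceConvergent y'' s := (hrhs.sub hlow).congr hsolve
  have hlaplace : (b₁ * laplace u' s + b₀ * laplace u s) -
      (a₁ * laplace y' s + a₀ * laplace y s) = laplace y'' s := by
    rw [← laplace_congr hsolve, laplace_sub hrhs hlow,
      laplace_add (hLu'.const_mul b₁) (hLu.const_mul b₀),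
      laplace_add (hLy'.const_mul a₁) (hLy.const_mul a₀)]
    simp only [laplace_const_mul]
  rw [laplace_deriv_of_zero_initial hy' hy'0 hLy' hLy'',
    laplace_deriv_of_zero_initial hy hy0 hLy hLy',
    laplace_deriv_of_zero_initial hu hu0 hLu hLu'] at hlaplace
  linear_combination -hlaplace

lemma norm_numerator_lt_norm_denominator_iff {α β κ ω : ℝ} (hω : ω ≠ 0) :
    ‖(β : ℂ) * (Complex.I * ω) + κ‖ < ‖(Complex.I * ω) ^ 2 + α * (Complex.I * ω) + κ‖ ↔
      2 * κ - (α ^ 2 - β ^ 2) < ω ^ 2 := by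
  have hnum : (β : ℂ) * (Complex.I * ω) + κ = (κ : ℝ) + (β * ω : ℝ) * Complex.I := by
    push_cast
    ring
  have hden : (Complex.I * ω) ^ 2 + α * (Complex.I * ω) + κ =
      (κ - ω ^ 2 : ℝ) + (α * ω : ℝ) * Complex.I := by
    push_cast
    linear_combination (ω : ℂ) ^ 2 * Complex.I_sq
  have hdiff : (κ - ω ^ 2) ^ 2 + (α * ω) ^ 2 - (κ ^ 2 + (β * ω) ^ 2) =
      ω ^ 2 * (ω ^ 2 - (2 * κ - (α ^ 2 - β ^ 2))) := by ring
  rw [← sq_lt_sq₀ (norm_nonneg _) (norm_nonneg _), ← Complex.normSq_eq_norm_sq,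
    ← Complex.normSq_eq_norm_sq, hnum, hden, Complex.normSq_add_mul_I, Complex.normSq_add_mul_I,
    ← sub_pos, hdiff, mul_pos_iff_of_pos_left (by positivity), sub_pos]

lemma headway_threshold_eq (m c k h0 ch vd : ℝ) :
    2 * (k / m) - (((c + k * h0 + k * ch * vd) / m) ^ 2 - ((c + k * ch * vd) / m) ^ 2) =
      2 * k / m - k * h0 * (2 * (c + k * ch * vd) + k * h0) / m ^ 2 := by ring

theorem stmt8_general {α β κ ω : ℝ} (hω : ω ≠ 0) (hfreq : 2 * κ - (α ^ 2 - β ^ 2) < ω ^ 2)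
    {z₁ z₂ z₁' z₂' z₂'' : ℝ → ℂ}
    (hdz₁ : ∀ t ∈ Set.Ici (0 : ℝ), HasDerivWithinAt z₁ (z₁' t) (Set.Ici 0) t)
    (hdz₂ : ∀ t ∈ Set.Ici (0 : ℝ), HasDerivWithinAt z₂ (z₂' t) (Set.Ici 0) t)
    (hdz₂' : ∀ t ∈ Set.Ici (0 : ℝ), HasDerivWithinAt z₂' (z₂'' t) (Set.Ici 0) t)
    (hLz₁ : LaplaceConvergent z₁ (Complex.I * ω)) (hLz₁' : LaplaceConvergent z₁' (Complex.I * ω))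
    (hLz₂ : LaplaceConvergent z₂ (Complex.I * ω)) (hLz₂' : LaplaceConvergent z₂' (Complex.I * ω))
    (hinit₁ : z₁ 0 = 0) (hinit₂ : z₂ 0 = 0) (hinit₂' : z₂' 0 = 0)
    (hode : ∀ t > (0 : ℝ), z₂'' t + α * z₂' t + κ * z₂ t = β * z₁' t + κ * z₁ t)
    (hL : laplace z₁ (Complex.I * ω) ≠ 0) :
    ‖laplace z₂ (Complex.I * ω) / laplace z₁ (Complex.I * ω)‖ < 1 := by
  have hnorm := (norm_numerator_lt_norm_denominator_iff hω).mpr hfreq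
  have hden_pos := (norm_nonneg _).trans_lt hnorm
  have htransfer := laplace_transfer_equation hdz₁ hdz₂ hdz₂' hLz₁ hLz₁' hLz₂ hLz₂'
    hinit₁ hinit₂ hinit₂' hode
  rw [(div_eq_div_iff hL (norm_pos_iff.mp hden_pos)).mpr ((mul_comm _ _).trans htransfer),
    norm_div, div_lt_one hden_pos]
  exact hnorm

theorem stmt8 (m c k h0 ch vd ω : ℝ) (hm : 0 < m) (hc : 0 < c) (hk : 0 < k) (hh0 : 0 < h0) (hch : 0 < ch) (hvd : 0 < vd) (hω : 0 < ω)
    (hfreq : 2 * k / m - k * h0 * (2 * (c + k * ch * vd) + k * h0) / m ^ 2 < ω ^ 2)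
    (s : ℂ) (hs : s = Complex.I * (ω : ℂ)) (a : ℝ) (ha : a < 0)
    (z₁ z₂ z₁' z₁'' z₂' z₂'' : ℝ → ℂ)
    (hdz₁ : ∀ t ∈ Set.Ici (0 : ℝ), HasDerivWithinAt z₁ (z₁' t) (Set.Ici 0) t)
    (hdz₁' : ∀ t ∈ Set.Ici (0 : ℝ), HasDerivWithinAt z₁' (z₁'' t) (Set.Ici 0) t)
    (hdz₂ : ∀ t ∈ Set.Ici (0 : ℝ), HasDerivWithinAt z₂ (z₂' t) (Set.Ici 0) t)
    (hdz₂' : ∀ t ∈ Set.Ici (0 : ℝ), HasDerivWithinAt z₂' (z₂'' t) (Set.Ici 0) t)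
    (hcz₁' : ContinuousOn z₁' (Set.Ici 0)) (hcz₁'' : ContinuousOn z₁'' (Set.Ici 0))
    (hcz₂' : ContinuousOn z₂' (Set.Ici 0)) (hcz₂'' : ContinuousOn z₂'' (Set.Ici 0))
    (hez₁ : ExpOrder z₁ a) (hez₁' : ExpOrder z₁' a)
    (hez₂ : ExpOrder z₂ a) (hez₂' : ExpOrder z₂' a) (hez₂'' : ExpOrder z₂'' a)
    (hinit₁ : z₁ 0 = 0) (hinit₂ : z₂ 0 = 0) (hinit₂' : z₂' 0 = 0)
    (hode : ∀ t ≥ (0 : ℝ),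
      z₂'' t + (((c + k * h0 + k * ch * vd) / m : ℝ) : ℂ) * z₂' t + ((k / m : ℝ) : ℂ) * z₂ t
        = (((c + k * ch * vd) / m : ℝ) : ℂ) * z₁' t + ((k / m : ℝ) : ℂ) * z₁ t)
    (hL : laplace z₁ s ≠ 0) :
    ‖laplace z₂ s / laplace z₁ s‖ < 1 := by
  subst hs
  have has : a < (Complex.I * (ω : ℂ)).re := by simpa using ha
  have hcz₁ : ContinuousOn z₁ (Set.Ici 0) := HasDerivWithinAt.continuousOn hdz₁
  have hcz₂ : ContinuousOn z₂ (Set.Ici 0) := HasDerivWithinAt.continuousOn hdz₂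
  exact stmt8_general hω.ne' ((headway_threshold_eq m c k h0 ch vd).trans_lt hfreq)
    hdz₁ hdz₂ hdz₂'
    (hez₁.laplaceConvergent_of_continuousOn hcz₁ has)
    (hez₁'.laplaceConvergent_of_continuousOn hcz₁' has)
    (hez₂.laplaceConvergent_of_continuousOn hcz₂ has)
    (hez₂'.laplaceConvergent_of_continuousOn hcz₂' has)
    hinit₁ hinit₂ hinit₂' (fun t ht => hode t (le_of_lt ht)) hL
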